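/- arXiv:2506.22278 — 2 statements merged into one kernel-verified Lean document; each statement's English description precedes it below -/
import Mathlib

section
/- Let 𝔤 be a finite-dimensional real Lie algebra containing an abelian ideal of codimension one, carrying a pseudo-Kähler structure (J, ⟨·,·⟩), and assume 𝔤 is unimodular, i.e. tr(ad X) = 0 for all X ∈ 𝔤. Then the Levi-Civita curvature of (𝔤, ⟨·,·⟩) vanishes identically: R(X,Y) = 0 for all X, Y ∈ 𝔤. -/
/-!
Let `θ` be a linear functional with kernel the abelian ideal `H`, let `ω = g(J·,·)`, and let `m` be
the `ω`-dual vector of `θ`, so that `ω(m,·) = θ`, `g(m,·) = θ ∘ J` and `m ∈ H`. As `H` is not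
`J`-stable, there is `a ∈ H` with `θ (J a) = 1`; if `θ (J m) ≠ 0`, i.e. if `g` is nondegenerate on
`H`, then `a` is chosen proportional to `m`. With `e = J a` and `A = ad e`, the whole bracket is
`[X,Y] = θ(X) A Y - θ(Y) A X`. Write `H₁ = H ∩ J H = ker θ ∩ ker (θ ∘ J)`.

* Integrability of `J` makes `A` commute with `J` on `H₁`, and closedness of `ω` makes `A`
  infinitesimally symplectic on `H`. Hence `A` is `g`-skew between `H₁` and `H`
  (as `g(A z, y) + g(z, A y) = 0` for `z ∈ H₁`, `y ∈ H`).
* Unimodularity gives `A m = 0` (`apply_eq_zero_of_trace_eq_zero`): if `A'` denotes the `ω`-adjoint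
  of `A`, then `A + A'` has trace `2 tr A = 0`, but it is an operator of rank at most two whose
  trace is `2 ω(A m, e)`.
* Consequently `A` also kills `J m` and maps everything into `H₁`.

The Koszul formula then yields `∇_z = 0` for `z ∈ H₁`, that `∇_e` has image in `H₁`, and
`∇_a Y = c (θ(J Y) J m - θ(Y) m)` with `c = g(A a, a)`, where `c = 0` unless `J m ∈ H₁`.
Flatness reduces to `[∇_e, ∇_a] = 0`, and both composites `∇_e ∇_a` and `∇_a ∇_e` vanish.
-/

/-- If `A` is infinitesimally symplectic on the hyperplane `ker θ`, has image in it, and kills the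
complementary vector `e`, then tracelessness of `A` forces `A` to kill the vector `m` dual to `θ`.
The symplectic form is encoded as an antisymmetric isomorphism `Φ` onto the dual space. -/
lemma apply_eq_zero_of_trace_eq_zero {V : Type*} [AddCommGroup V] [Module ℝ V]
    [FiniteDimensional ℝ V] (Φ : V ≃ₗ[ℝ] Module.Dual ℝ V) (hΦ : ∀ x y, Φ x y = -Φ y x)
    (A : V →ₗ[ℝ] V) (θ : Module.Dual ℝ V) (m e : V) (hm : Φ m = θ) (he : θ e = 1)
    (hAe : A e = 0) (hθA : ∀ x, θ (A x) = 0)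
    (hA : ∀ x y, θ x = 0 → θ y = 0 → Φ (A x) y + Φ x (A y) = 0)
    (htr : LinearMap.trace ℝ V A = 0) : A m = 0 := by
  set A' : V →ₗ[ℝ] V := Φ.symm.conj (Module.Dual.transpose (R := ℝ) A) with hA'
  have hA'app : ∀ x y, Φ (A' x) y = Φ x (A y) := by
    intro x y
    simp [hA', LinearEquiv.conj_apply, Module.Dual.transpose_apply]
  have htr' : LinearMap.trace ℝ V A' = 0 := by
    rw [hA', LinearMap.trace_conj', LinearMap.trace_transpose', htr]
  -- both sides agree on `ker θ × ker θ`, and `e` spans a complement of `ker θ`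
  have key : ∀ x y, Φ (A x) y + Φ x (A y) = Φ (A x) e * θ y + θ x * Φ e (A y) := by
    intro x y
    have h := hA (x - θ x • e) (y - θ y • e) (by simp [he]) (by simp [he])
    simp only [map_sub, map_smul, hAe, LinearMap.sub_apply, LinearMap.smul_apply, smul_eq_mul,
      smul_zero, sub_zero] at h
    linarith
  set φ : Module.Dual ℝ V := -(Φ e ∘ₗ A) with hφ
  have hφa : ∀ x, φ x = Φ (A x) e := by
    intro x
    simp [hφ, hΦ (A x) e]
  have hB : A + A' = φ.smulRight m + θ.smulRight (A' e) := by
    ext x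
    apply Φ.injective
    ext y
    have := key x y
    simp only [LinearMap.add_apply, map_add, LinearMap.smulRight_apply, map_smul,
      LinearMap.smul_apply, hm, hA'app, smul_eq_mul, hφa]
    linarith
  have ht := congrArg (LinearMap.trace ℝ V) hB
  rw [map_add, map_add, htr, htr', LinearMap.trace_smulRight, LinearMap.trace_smulRight, hφa,
    ← hm, hΦ m (A' e), hA'app, hΦ e (A m)] at ht
  have h0 : Φ (A m) e = 0 := by linarith
  apply Φ.injective
  ext y
  have hk := key m y
  have hmm : θ m = 0 := by
    have := hΦ m m
    rw [hm] at this
    linarith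
  rw [h0, hmm, hm, hθA] at hk
  simpa using hk

/-- A hyperplane is never stable under a linear complex structure. -/
lemma exists_apply_complex_structure_ne_zero {V : Type*} [AddCommGroup V] [Module ℝ V]
    (J : V →ₗ[ℝ] V) (hJ2 : ∀ X, J (J X) = -X) (θ : V →ₗ[ℝ] ℝ) (hθ : θ ≠ 0) :
    ∃ a, θ a = 0 ∧ θ (J a) ≠ 0 := by
  by_contra! hcon
  obtain ⟨x, hx⟩ : ∃ x, θ x ≠ 0 := by
    by_contra! h
    exact hθ (LinearMap.ext h)
  -- for `J x ≡ k x` modulo the hyperplane, stability would give `(1 + k ^ 2) θ x = 0`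
  have h1 : θ (J x - (θ (J x) / θ x) • x) = 0 := by simp [hx]
  have h2 := hcon _ h1
  rw [map_sub, map_smul, hJ2, map_sub, map_neg, map_smul, smul_eq_mul] at h2
  have h3 : θ x * θ x + θ (J x) * θ (J x) = 0 := by
    field_simp at h2
    linarith
  have := mul_self_pos.mpr hx
  nlinarith [mul_self_nonneg (θ (J x))]

/-- A submodule of codimension one is the kernel of a nonzero functional. -/
lemma exists_functional_of_codim_one {V : Type*} [AddCommGroup V] [Module ℝ V]
    [FiniteDimensional ℝ V] (H : Submodule ℝ V)
    (hH : Module.finrank ℝ V = Module.finrank ℝ H + 1) :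
    ∃ θ : V →ₗ[ℝ] ℝ, θ ≠ 0 ∧ ∀ x, x ∈ H ↔ θ x = 0 := by
  have hlt : H < ⊤ := by
    rw [lt_top_iff_ne_top]
    rintro rfl
    rw [finrank_top] at hH
    omega
  obtain ⟨θ, hθ0, hθ⟩ := H.exists_le_ker_of_lt_top hlt
  have hk := Module.Dual.finrank_ker_add_one_of_ne_zero hθ0
  have heq : H = LinearMap.ker θ := Submodule.eq_of_le_of_finrank_eq hθ (by omega)
  exact ⟨θ, hθ0, fun x => by rw [heq, LinearMap.mem_ker]⟩

/-- **Corollary.** A unimodular almost abelian pseudo-Kähler Lie algebra is flat. -/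
theorem stmt6 (L : Type) [LieRing L] [LieAlgebra ℝ L] [FiniteDimensional ℝ L]
    (H : Submodule ℝ L)
    (hHabelian : ∀ x ∈ H, ∀ y ∈ H, ⁅x, y⁆ = 0)
    (hHideal : ∀ x : L, ∀ y ∈ H, ⁅x, y⁆ ∈ H)
    (hHcodim : Module.finrank ℝ L = Module.finrank ℝ H + 1)
    (J : L →ₗ[ℝ] L) (g : LinearMap.BilinForm ℝ L)
    (hJ2 : ∀ X, J (J X) = -X)
    (hsymm : ∀ X Y, g X Y = g Y X)
    (hnondeg : g.Nondegenerate)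
    (hJg : ∀ X Y, g (J X) (J Y) = g X Y)
    (hN : ∀ X Y : L, ⁅X, Y⁆ + J ⁅J X, Y⁆ + J ⁅X, J Y⁆ - ⁅J X, J Y⁆ = 0)
    (hclosed : ∀ X Y Z : L, g (J ⁅X, Y⁆) Z + g (J ⁅Y, Z⁆) X + g (J ⁅Z, X⁆) Y = 0)
    (hunimodular : ∀ X : L, LinearMap.trace ℝ L (LieAlgebra.ad ℝ L X : L →ₗ[ℝ] L) = 0)
    (nab : L →ₗ[ℝ] L →ₗ[ℝ] L)
    (hkoszul : ∀ X Y Z : L,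
      2 * g (nab X Y) Z = g ⁅X, Y⁆ Z - g ⁅Y, Z⁆ X + g ⁅Z, X⁆ Y) :
    ∀ X Y Z : L, nab X (nab Y Z) - nab Y (nab X Z) - nab ⁅X, Y⁆ Z = 0 := by
  obtain ⟨θ, hθ0, hθH⟩ := exists_functional_of_codim_one H hHcodim
  have hgJ : ∀ x y, g (J x) y = -g x (J y) := by
    intro x y
    have := hJg x (J y)
    rw [hJ2, map_neg] at this
    linarith
  have hext : ∀ x, (∀ y, g x y = 0) → x = 0 := fun x h => hnondeg.1 x h
  -- the isomorphism `x ↦ ω(x,·)` onto the dual space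
  let Je : L ≃ₗ[ℝ] L := LinearEquiv.ofLinearMap J (-J) (by ext x; simp [hJ2]) (by ext x; simp [hJ2])
  let Φ : L ≃ₗ[ℝ] Module.Dual ℝ L := Je.trans (LinearMap.BilinForm.toDual g hnondeg)
  have hΦ : ∀ x y, Φ x y = g (J x) y := fun x y => rfl
  obtain ⟨m, hm⟩ := Φ.surjective θ
  have hn : ∀ y, g (J m) y = θ y := by
    intro y
    rw [← hΦ, hm]
  have hgm : ∀ y, g m y = θ (J y) := by
    intro y
    rw [← hn, hJg]
  have hθm : θ m = 0 := by
    have h1 := hn m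
    have h2 := hgJ m m
    rw [hsymm m (J m)] at h2
    linarith
  -- the choice of `a`: proportional to `m` whenever `J m ∉ H`
  obtain ⟨a, ha, haJ, ham⟩ : ∃ a, θ a = 0 ∧ θ (J a) = 1 ∧ (θ (J m) = 0 ∨ m = θ (J m) • a) := by
    by_cases h : θ (J m) = 0
    · obtain ⟨b, hb, hbJ⟩ := exists_apply_complex_structure_ne_zero J hJ2 θ hθ0
      exact ⟨(θ (J b))⁻¹ • b, by simp [hb], by simp [hbJ], Or.inl h⟩
    · exact ⟨(θ (J m))⁻¹ • m, by simp [hθm], by simp [h], Or.inr (by simp [smul_smul, h])⟩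
  obtain ⟨e, he⟩ : ∃ e, e = J a := ⟨_, rfl⟩
  have hθe : θ e = 1 := by rw [he, haJ]
  have hJe : J e = -a := by rw [he, hJ2]
  obtain ⟨A, hAdef⟩ : ∃ A : L →ₗ[ℝ] L, A = LieAlgebra.ad ℝ L e := ⟨_, rfl⟩
  have hA : ∀ x, A x = ⁅e, x⁆ := fun x => by rw [hAdef]; rfl
  have hAe : A e = 0 := by rw [hA, lie_self]
  have hab : ∀ x y, θ x = 0 → θ y = 0 → ⁅x, y⁆ = 0 := fun x y hx hy =>
    hHabelian x ((hθH x).2 hx) y ((hθH y).2 hy)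
  have hbr : ∀ X Y, ⁅X, Y⁆ = θ X • A Y - θ Y • A X := by
    intro X Y
    have h := hab (X - θ X • e) (Y - θ Y • e) (by simp [hθe]) (by simp [hθe])
    simp only [sub_lie, lie_sub, smul_lie, lie_smul, lie_self, smul_zero, sub_zero,
      ← lie_skew X e, ← hA] at h
    rw [smul_neg, sub_neg_eq_add] at h
    rw [← sub_eq_zero, ← h]
    abel
  have hθA : ∀ x, θ (A x) = 0 := by
    intro x
    have h := (hθH _).1 (hHideal e (x - θ x • e) ((hθH _).2 (by simp [hθe])))
    rwa [← hA, map_sub, map_smul, hAe, smul_zero, sub_zero] at h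
  -- integrability of `J`: `A` commutes with `J` on `H₁`
  have hAJ : ∀ z, θ z = 0 → θ (J z) = 0 → A (J z) = J (A z) := by
    intro z hz hJz
    have h := hN e z
    rw [hJe, hab (-a) z (by simp [ha]) hz, hab (-a) (J z) (by simp [ha]) hJz, ← hA, ← hA,
      map_zero, add_zero, sub_zero] at h
    have h2 := congrArg J h
    rw [map_add, hJ2, map_zero, ← sub_eq_add_neg, sub_eq_zero] at h2
    exact h2.symm
  -- closedness of `ω`: `A` is infinitesimally symplectic on `H`
  have hAsp : ∀ x y, θ x = 0 → θ y = 0 → g (J (A x)) y + g (J x) (A y) = 0 := by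
    intro x y hx hy
    have h := hclosed e x y
    rw [hab x y hx hy, ← hA, ← lie_skew y e, ← hA, map_zero, map_zero, map_neg, map_neg,
      LinearMap.zero_apply, LinearMap.neg_apply, hgJ (A y) x, hsymm (A y) (J x)] at h
    linarith
  have hAm : A m = 0 := by
    refine apply_eq_zero_of_trace_eq_zero Φ ?_ A θ m e hm hθe hAe hθA hAsp ?_
    · intro x y
      rw [hΦ, hΦ, hgJ, hsymm]
    · rw [hAdef]
      exact hunimodular e
  have hAn : A (J m) = 0 := by
    rcases ham with h | h
    · rw [hAJ m hθm h, hAm, map_zero]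
    · rw [h, map_smul, ← he, map_smul, hAe, smul_zero]
  have hθJA_a : θ (J (A a)) = 0 := by
    by_cases h0 : θ (J m) = 0
    · have := hAsp a (J m) ha h0
      rw [hAn, map_zero, add_zero, hsymm, hn] at this
      exact this
    · rw [ham.resolve_left h0, map_smul] at hAm
      rw [(smul_eq_zero.1 hAm).resolve_left h0, map_zero, map_zero]
  -- the decomposition `L = H₁ ⊕ ℝ a ⊕ ℝ e`
  have hdec : ∀ X, ∃ z, θ z = 0 ∧ θ (J z) = 0 ∧ X = z + θ (J X) • a + θ X • e := by
    intro X
    refine ⟨X - θ (J X) • a - θ X • e, ?_, ?_, ?_⟩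
    · simp [ha, hθe]
    · simp [haJ, hJe, ha]
    · abel
  have hθJA : ∀ X, θ (J (A X)) = 0 := by
    intro X
    obtain ⟨z, hz, hJz, hX⟩ := hdec X
    rw [hX]
    simp only [map_add, map_smul, hAe, hθJA_a, ← hAJ z hz hJz, hθA, smul_zero, add_zero]
  have hS0 : ∀ z W, θ z = 0 → θ (J z) = 0 → θ W = 0 → g (A z) W + g (A W) z = 0 := by
    intro z W hz hJz hW
    have h := hAsp W (J z) hW hJz
    rw [hAJ z hz hJz, hJg, hJg, hsymm W] at h
    linarith
  have hS : ∀ z W, θ z = 0 → θ (J z) = 0 → g (A z) W + g (A W) z = θ W * g (A z) e := by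
    intro z W hz hJz
    have h := hS0 z (W - θ W • e) hz hJz (by simp [hθe])
    simp only [map_sub, map_smul, hAe, smul_zero, sub_zero, smul_eq_mul] at h
    linarith
  have hSa : ∀ W, g (A a) W + g (A W) a = 2 * g (A a) a * θ (J W) + θ W * g (A a) e := by
    intro W
    obtain ⟨z, hz, hJz, hW⟩ := hdec W
    have h := hS0 z a hz hJz ha
    have h1 : g (A a) W = g (A a) z + θ (J W) * g (A a) a + θ W * g (A a) e := by
      conv_lhs => rw [hW]
      simp
    have h2 : g (A W) a = g (A z) a + θ (J W) * g (A a) a := by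
      conv_lhs => rw [hW]
      simp [hAe]
    rw [h1, h2]
    linarith
  have hK : ∀ X Y Z, 2 * g (nab X Y) Z = θ X * (g (A Y) Z - g (A Z) Y)
      - θ Y * (g (A X) Z + g (A Z) X) + θ Z * (g (A Y) X + g (A X) Y) := by
    intro X Y Z
    rw [hkoszul, hbr X Y, hbr Y Z, hbr Z X]
    simp only [map_sub, map_smul, LinearMap.sub_apply, LinearMap.smul_apply, smul_eq_mul]
    ring
  have hnabz : ∀ z, θ z = 0 → θ (J z) = 0 → nab z = 0 := by
    intro z hz hJz
    ext Y
    apply hext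
    intro Z
    have h := hK z Y Z
    rw [hz, hS z Z hz hJz, add_comm (g (A Y) z), hS z Y hz hJz] at h
    linarith
  obtain ⟨c, hc⟩ : ∃ c, c = g (A a) a := ⟨_, rfl⟩
  have hnaba : ∀ Y, nab a Y = c • (θ (J Y) • J m - θ Y • m) := by
    intro Y
    rw [← sub_eq_zero]
    apply hext
    intro Z
    have h := hK a Y Z
    rw [ha, hSa Z, add_comm (g (A Y) a), hSa Y, ← hc] at h
    simp only [map_sub, map_smul, LinearMap.sub_apply, LinearMap.smul_apply, smul_eq_mul, hn, hgm]
    linarith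
  have hnabe : ∀ Y, θ (nab e Y) = 0 ∧ θ (J (nab e Y)) = 0 := by
    intro Y
    constructor
    · have h := hK e Y (J m)
      have h0 : θ (J m) * g (A Y) e = 0 := by
        rcases ham with h1 | h1
        · rw [h1, zero_mul]
        · have h2 : θ (J m) * g (A Y) e = g (A Y) (J m) := by
            conv_rhs => rw [h1, map_smul, ← he]
            simp
          rw [h2, hsymm, hn, hθA]
      rw [hAn, hAe, hsymm (A Y) (J m), hn, hθA, hsymm _ (J m), hn] at h
      simp only [map_zero, LinearMap.zero_apply] at h
      linarith
    · have h := hK e Y m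
      rw [hAm, hAe, hsymm (A Y) m, hgm, hθJA, hsymm _ m, hgm, hθm] at h
      simp only [map_zero, LinearMap.zero_apply] at h
      linarith
  have hnabea : ∀ Z, nab e (nab a Z) = 0 := by
    intro Z
    rw [hnaba]
    by_cases h0 : θ (J m) = 0
    · -- here `m` and `J m` lie in `H₁`, and both are killed by `A`
      have htor : ∀ z, θ z = 0 → θ (J z) = 0 → A z = 0 → nab e z = 0 := by
        intro z hz hJz hAz
        apply hext
        intro W
        have h := hK e z W
        have h' := hS z W hz hJz
        rw [hAz, hAe, hz, hθe] at h
        rw [hAz] at h'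
        simp only [map_zero, LinearMap.zero_apply] at h h'
        linarith
      rw [map_smul, map_sub, map_smul, map_smul, htor m hθm h0 hAm,
        htor (J m) h0 (by rw [hJ2, map_neg, hθm, neg_zero]) hAn]
      simp
    · have h1 := ham.resolve_left h0
      have h2 : A a = 0 := by
        rw [h1, map_smul] at hAm
        exact (smul_eq_zero.1 hAm).resolve_left h0
      rw [hc, h2]
      simp
  have hnabae : ∀ Z, nab a (nab e Z) = 0 := by
    intro Z
    rw [hnaba, (hnabe Z).1, (hnabe Z).2]
    simp
  have hnabX : ∀ X Z, nab X Z = θ (J X) • nab a Z + θ X • nab e Z := by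
    intro X Z
    obtain ⟨z, hz, hJz, hX⟩ := hdec X
    conv_lhs => rw [hX]
    simp [hnabz z hz hJz]
  intro X Y Z
  have hlie : nab ⁅X, Y⁆ = 0 := by
    apply hnabz <;> rw [hbr] <;> simp [hθA, hθJA]
  rw [hlie, LinearMap.zero_apply, sub_zero, hnabX X, hnabX Y Z, hnabX Y (nab X Z), hnabX X Z]
  simp only [map_add, map_smul, hnabea, hnabae, smul_zero, add_zero, zero_add]
  rw [smul_comm (θ (J X)), smul_comm (θ X), sub_self]
end

section
/- Let 𝔤 = 𝔥 ⋊_D span(e_{2n}) be an almost abelian Lie algebra, i.e. 𝔥 is an abelian ideal of codimension one and [e_{2n}, x] = D x for x ∈ 𝔥, where D ∈ End(𝔥). Let K ∈ End(𝔥), α ∈ 𝔥*, u ∈ 𝔥, k ∈ ℝ, and let φ : 𝔤 → 𝔤 be the linear map defined by φ(x) = K x + α(x) e_{2n} for x ∈ 𝔥 and φ(e_{2n}) = k e_{2n} + u. Then φ is a derivation of 𝔤 if and only if K∘D − D∘K = k·D and either α = 0 or (Im D ⊆ ker α and ker α ⊆ ker D). -/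
/-!
Write `X = h + t • E` and `Y = h' + s • E` with `h, h' ∈ H`. Then `⁅X, Y⁆ = t • D h' - s • D h`, so
the Leibniz rule only has to be tested on the pairs `(E, x)` and `(x, y)` with `x, y ∈ H`.

* On `(E, x)` it reads `K (D x) + α (D x) • E = k • D x + D (K x)`; splitting along `H ⊕ ℝ E`, this
  is `K (D x) - D (K x) = k • D x` together with `α (D x) = 0`.
* On `(x, y)` it reads `α x • D y = α y • D x`. If `α` vanishes on `H` this is empty. Otherwise it is
  equivalent to `ker α ⊆ ker D`: one direction takes `α y = 0` and `α x ≠ 0`, the other applies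
  the inclusion to `α x • y - α y • x ∈ ker α`.
-/

/-- **Lemma (derivations of an almost abelian Lie algebra).** -/
theorem stmt16 (L : Type) [LieRing L] [LieAlgebra ℝ L]
    (H : Submodule ℝ L) (E : L)
    (hspan : ∀ x : L, ∃ h ∈ H, ∃ t : ℝ, x = h + t • E)
    (hE : E ∉ H)
    (habelian : ∀ x ∈ H, ∀ y ∈ H, ⁅x, y⁆ = 0)
    (D : L →ₗ[ℝ] L)
    (hD : ∀ x ∈ H, ⁅E, x⁆ = D x)
    (hDH : ∀ x ∈ H, D x ∈ H)
    (K : L →ₗ[ℝ] L) (hK : ∀ x ∈ H, K x ∈ H)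
    (α : L →ₗ[ℝ] ℝ)
    (u : L) (hu : u ∈ H) (k : ℝ)
    (φ : L →ₗ[ℝ] L)
    (hφH : ∀ x ∈ H, φ x = K x + α x • E)
    (hφE : φ E = k • E + u) :
    (∀ X Y : L, φ ⁅X, Y⁆ = ⁅φ X, Y⁆ + ⁅X, φ Y⁆) ↔
    ((∀ x ∈ H, K (D x) - D (K x) = k • D x) ∧
      ((∀ x ∈ H, α x = 0) ∨
        ((∀ x ∈ H, α (D x) = 0) ∧ (∀ x ∈ H, α x = 0 → D x = 0)))) := by
  -- The bracket in coordinates along `H ⊕ ℝ E`.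
  have hbr : ∀ h ∈ H, ∀ h' ∈ H, ∀ t s : ℝ,
      ⁅h + t • E, h' + s • E⁆ = t • D h' - s • D h := by
    intro h hh h' hh' t s
    have hhE : ⁅h, E⁆ = -D h := by rw [← hD h hh, lie_skew]
    simp only [add_lie, lie_add, smul_lie, lie_smul, lie_self, habelian h hh h' hh',
      hD h' hh', hhE]
    module
  constructor
  · intro hder
    have hEx : ∀ x ∈ H, K (D x) - D (K x) = k • D x ∧ α (D x) = 0 := by
      intro x hx
      have h1 := hder E x
      have h2 := hbr u hu x hx k 0
      have h3 := hbr 0 H.zero_mem (K x) (hK x hx) 1 (α x)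
      simp only [zero_smul, add_zero, zero_add, one_smul, map_zero, smul_zero, sub_zero] at h2 h3
      rw [hD x hx, hφH _ (hDH x hx), hφE, hφH x hx, add_comm (k • E) u, h2, h3] at h1
      have hαD : α (D x) = 0 := by
        by_contra hne
        -- Otherwise `α (D x) • E`, hence `E`, would lie in `H`.
        apply hE
        rw [← H.smul_mem_iff hne]
        have h4 : α (D x) • E = k • D x + D (K x) - K (D x) := by
          rw [← h1]; abel
        rw [h4]
        exact H.sub_mem (H.add_mem (H.smul_mem _ (hDH x hx)) (hDH _ (hK x hx)))
          (hK _ (hDH x hx))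
      refine ⟨?_, hαD⟩
      rw [hαD, zero_smul, add_zero] at h1
      rw [h1]; abel
    have hxy : ∀ x ∈ H, ∀ y ∈ H, α x • D y = α y • D x := by
      intro x hx y hy
      have h1 := hder x y
      have h2 := hbr (K x) (hK x hx) y hy (α x) 0
      have h3 := hbr x hx (K y) (hK y hy) 0 (α y)
      simp only [zero_smul, add_zero, sub_zero, zero_sub] at h2 h3
      rw [habelian x hx y hy, map_zero, hφH x hx, hφH y hy, h2, h3, ← sub_eq_add_neg] at h1
      exact sub_eq_zero.mp h1.symm
    refine ⟨fun x hx => (hEx x hx).1, ?_⟩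
    by_cases hα : ∀ x ∈ H, α x = 0
    · exact Or.inl hα
    · push Not at hα
      obtain ⟨x, hx, hne⟩ := hα
      refine Or.inr ⟨fun y hy => (hEx y hy).2, fun y hy hy0 => ?_⟩
      have h1 := hxy x hx y hy
      rw [hy0, zero_smul] at h1
      exact (smul_eq_zero.mp h1).resolve_left hne
  · rintro ⟨hcomm, hor⟩
    have hαD : ∀ x ∈ H, α (D x) = 0 := by
      rcases hor with h | h
      · exact fun x hx => h _ (hDH x hx)
      · exact h.1
    have hxy : ∀ x ∈ H, ∀ y ∈ H, α x • D y = α y • D x := by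
      intro x hx y hy
      rcases hor with h | h
      · rw [h x hx, h y hy, zero_smul, zero_smul]
      · have h1 := h.2 (α x • y - α y • x) (H.sub_mem (H.smul_mem _ hy) (H.smul_mem _ hx))
          (by simp only [map_sub, map_smul, smul_eq_mul]; ring)
        rw [map_sub, map_smul, map_smul] at h1
        exact sub_eq_zero.mp h1
    have hφ : ∀ h ∈ H, ∀ t : ℝ, φ (h + t • E) = (K h + t • u) + (α h + t * k) • E := by
      intro h hh t
      rw [map_add, map_smul, hφH h hh, hφE]
      module
    have hφD : ∀ h ∈ H, φ (D h) = k • D h + D (K h) := by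
      intro h hh
      rw [hφH _ (hDH h hh), hαD h hh, zero_smul, add_zero, ← hcomm h hh, sub_add_cancel]
    intro X Y
    obtain ⟨h, hh, t, rfl⟩ := hspan X
    obtain ⟨h', hh', s, rfl⟩ := hspan Y
    rw [hφ h hh, hφ h' hh', hbr h hh h' hh',
      hbr _ (H.add_mem (hK h hh) (H.smul_mem _ hu)) h' hh',
      hbr h hh _ (H.add_mem (hK h' hh') (H.smul_mem _ hu)),
      map_sub, map_smul, map_smul, hφD h hh, hφD h' hh']
    simp only [map_add, map_smul, add_smul, hxy h hh h' hh']
    module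
end
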